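/- arXiv:2010.10514 — 3 statements merged into one kernel-verified Lean document; each statement's English description precedes it below -/
import Mathlib

section
/- Let (f, τ) be a p-ASF for X. A bounded linear operator L : ℓ^p(ℕ) → X satisfies L ∘ θ_f = I_X (i.e., L is a bounded left-inverse of θ_f) if and only if L = S_{f,τ}^{-1} ∘ θ_τ + V ∘ (I_{ℓ^p(ℕ)} − θ_f ∘ S_{f,τ}^{-1} ∘ θ_τ) for some bounded linear operator V : ℓ^p(ℕ) → X. -/
open scoped ENNReal

/-- A p-approximate Schauder frame (p-ASF) for a Banach space `X`:
functionals `f`, vectors `τ`, an invertible frame operator `S` with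
`S x = ∑ f n x • τ n`, a bounded analysis operator `θf` into `ℓ^p(ℕ)`,
and a bounded synthesis operator `θτ` from `ℓ^p(ℕ)`. -/
structure pASF (p : ℝ≥0∞) [Fact (1 ≤ p)] (X : Type*) [NormedAddCommGroup X]
    [NormedSpace ℝ X] where
  f : ℕ → X →L[ℝ] ℝ
  τ : ℕ → X
  S : X ≃L[ℝ] X
  hS : ∀ x : X, HasSum (fun n => f n x • τ n) (S x)
  θf : X →L[ℝ] lp (fun _ : ℕ => ℝ) p
  hθf : ∀ (x : X) (n : ℕ), (θf x : ℕ → ℝ) n = f n x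
  θτ : lp (fun _ : ℕ => ℝ) p →L[ℝ] X
  hθτ : ∀ a : lp (fun _ : ℕ => ℝ) p, HasSum (fun n => (a : ℕ → ℝ) n • τ n) (θτ a)

theorem comp_eq_id_iff_exists_eq_add_comp_id_sub {R E F : Type*} [Ring R]
    [AddCommGroup E] [TopologicalSpace E] [IsTopologicalAddGroup E] [Module R E]
    [AddCommGroup F] [TopologicalSpace F] [IsTopologicalAddGroup F] [Module R F]
    {A : E →L[R] F} {G : F →L[R] E} (hG : G.comp A = ContinuousLinearMap.id R E)
    (L : F →L[R] E) :
    L.comp A = ContinuousLinearMap.id R E ↔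
      ∃ V : F →L[R] E, L = G + V.comp (ContinuousLinearMap.id R F - A.comp G) := by
  constructor
  · intro hL
    refine ⟨L, ?_⟩
    rw [ContinuousLinearMap.comp_sub, ← ContinuousLinearMap.comp_assoc, hL,
      ContinuousLinearMap.comp_id, ContinuousLinearMap.id_comp, add_sub_cancel]
  · rintro ⟨V, rfl⟩
    have id_sub_comp_eq_zero : (ContinuousLinearMap.id R F - A.comp G).comp A = 0 := by
      rw [ContinuousLinearMap.sub_comp, ContinuousLinearMap.comp_assoc, hG,
        ContinuousLinearMap.comp_id, ContinuousLinearMap.id_comp, sub_self]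
    rw [ContinuousLinearMap.add_comp, ContinuousLinearMap.comp_assoc, id_sub_comp_eq_zero,
      ContinuousLinearMap.comp_zero, add_zero, hG]

namespace pASF

variable {p : ℝ≥0∞} [Fact (1 ≤ p)] {X : Type*} [NormedAddCommGroup X] [NormedSpace ℝ X]

theorem θτ_comp_θf (F : pASF p X) : F.θτ.comp F.θf = (F.S : X →L[ℝ] X) := by
  ext x
  have hasSum_θτ_θf : HasSum (fun n => F.f n x • F.τ n) (F.θτ (F.θf x)) := by
    simpa only [F.hθf] using F.hθτ (F.θf x)
  exact hasSum_θτ_θf.unique (F.hS x)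

theorem S_symm_comp_θτ_comp_θf (F : pASF p X) :
    ((F.S.symm : X →L[ℝ] X).comp F.θτ).comp F.θf = ContinuousLinearMap.id ℝ X := by
  rw [ContinuousLinearMap.comp_assoc, F.θτ_comp_θf, F.S.coe_symm_comp_coe]

end pASF

theorem stmt_11_general {X : Type*} [NormedAddCommGroup X] [NormedSpace ℝ X]
    (p : ℝ≥0∞) [Fact (1 ≤ p)] (F : pASF p X) (L : lp (fun _ : ℕ => ℝ) p →L[ℝ] X) :
    L.comp F.θf = ContinuousLinearMap.id ℝ X ↔
    ∃ V : lp (fun _ : ℕ => ℝ) p →L[ℝ] X,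
      L = (F.S.symm : X →L[ℝ] X).comp F.θτ +
        V.comp (ContinuousLinearMap.id ℝ (lp (fun _ : ℕ => ℝ) p) -
          F.θf.comp ((F.S.symm : X →L[ℝ] X).comp F.θτ)) :=
  comp_eq_id_iff_exists_eq_add_comp_id_sub F.S_symm_comp_θτ_comp_θf L

/-- characterization of bounded left-inverses of `θ_f`. -/
theorem stmt_11 {X : Type*} [NormedAddCommGroup X] [NormedSpace ℝ X] [CompleteSpace X]
    (p : ℝ≥0∞) [Fact (1 ≤ p)] (hp : p ≠ ∞) (F : pASF p X)
    (L : lp (fun _ : ℕ => ℝ) p →L[ℝ] X) :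
    L.comp F.θf = ContinuousLinearMap.id ℝ X ↔
    ∃ V : lp (fun _ : ℕ => ℝ) p →L[ℝ] X,
      L = (F.S.symm : X →L[ℝ] X).comp F.θτ +
        V.comp (ContinuousLinearMap.id ℝ (lp (fun _ : ℕ => ℝ) p) -
          F.θf.comp ((F.S.symm : X →L[ℝ] X).comp F.θτ)) :=
  stmt_11_general p F L
end

section
/- Let (f, τ) be a p-ASF for X. Then a p-ASF (g, ω) for X is a dual of (f, τ) if and only if there exist bounded linear operators U : X → ℓ^p(ℕ) and V : ℓ^p(ℕ) → X such that g_n = f_n ∘ S_{f,τ}^{-1} + h_n ∘ U − f_n ∘ S_{f,τ}^{-1} ∘ θ_τ ∘ U and ω_n = S_{f,τ}^{-1}τ_n + V e_n − V θ_f S_{f,τ}^{-1}τ_n for all n ∈ ℕ, and the operator S_{f,τ}^{-1} + V ∘ U − V ∘ θ_f ∘ S_{f,τ}^{-1} ∘ θ_τ ∘ U : X → X is bounded invertible. -/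
open scoped ENNReal

/-- `G` is a dual p-ASF of `F`: `x = ∑ G.f n x • F.τ n = ∑ F.f n x • G.τ n`. -/
def pASF.IsDual {p : ℝ≥0∞} [Fact (1 ≤ p)] {X : Type*} [NormedAddCommGroup X]
    [NormedSpace ℝ X] (F G : pASF p X) : Prop :=
  ∀ x : X, HasSum (fun n => G.f n x • F.τ n) x ∧ HasSum (fun n => F.f n x • G.τ n) x

/-!
Duality says that `G.θf` is a right inverse of `F.θτ` and `G.θτ` a left inverse of `F.θf`. Since
`S = θτ ∘ θf` is invertible, `θf ∘ S⁻¹` is one right inverse of `θτ`, and the others arise by adding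
a map `U` corrected by the projection `1 - θf ∘ S⁻¹ ∘ θτ` onto `ker θτ`; dually, `S⁻¹ ∘ θτ` is one
left inverse of `θf`, and the others arise by adding `V ∘ (1 - θf ∘ S⁻¹ ∘ θτ)`. The formula for
`G.f n` is the `n`-th coordinate of the first identity; the formula for `G.τ n` is the second one at
the `n`-th unit vector, and these vectors span a dense subspace of `ℓ^p` for `p < ∞`. The composite
of the two inverses is the frame operator of `G`, and expanding it gives the third operator,
which is therefore invertible.
-/

section OneSidedInverses

variable {R X Y E : Type*} [Ring R]
  [AddCommGroup X] [Module R X] [TopologicalSpace X]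
  [AddCommGroup Y] [Module R Y] [TopologicalSpace Y]
  [AddCommGroup E] [Module R E] [TopologicalSpace E]

/-- The right inverse of `B` obtained from `A ∘ S⁻¹` and an arbitrary parameter `U`, where
`S = B ∘ A` is invertible. The relation `S = B ∘ A` is a hypothesis of the lemmas rather than part
of the definition. -/
def perturbedRightInverse [IsTopologicalAddGroup E] (A : X →L[R] E) (B : E →L[R] Y) (S : X ≃L[R] Y)
    (U : Y →L[R] E) : Y →L[R] E :=
  A ∘L S.symm + U - A ∘L S.symm ∘L B ∘L U

/-- The left inverse of `A` obtained from `S⁻¹ ∘ B` and an arbitrary parameter `V`, where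
`S = B ∘ A` is invertible. The relation `S = B ∘ A` is a hypothesis of the lemmas rather than part
of the definition. -/
def perturbedLeftInverse [IsTopologicalAddGroup X] (A : X →L[R] E) (B : E →L[R] Y) (S : X ≃L[R] Y)
    (V : E →L[R] X) : E →L[R] X :=
  S.symm ∘L B + V - V ∘L A ∘L S.symm ∘L B

variable {A : X →L[R] E} {B : E →L[R] Y} {S : X ≃L[R] Y}

theorem comp_eq_id_iff_exists_eq_perturbedRightInverse [IsTopologicalAddGroup E]
    (hS : B ∘L A = S) {T : Y →L[R] E} :
    B ∘L T = .id R Y ↔ ∃ U, T = perturbedRightInverse A B S U := by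
  have hS_apply (x : X) : B (A x) = S x := DFunLike.congr_fun hS x
  constructor
  · intro hT
    have hT_apply (y : Y) : B (T y) = y := DFunLike.congr_fun hT y
    exact ⟨T, by ext y; simp [perturbedRightInverse, hT_apply]⟩
  · rintro ⟨U, rfl⟩
    ext y
    simp [perturbedRightInverse, hS_apply]

theorem comp_eq_id_iff_exists_eq_perturbedLeftInverse [IsTopologicalAddGroup X]
    (hS : B ∘L A = S) {T : E →L[R] X} :
    T ∘L A = .id R X ↔ ∃ V, T = perturbedLeftInverse A B S V := by
  have hS_apply (x : X) : B (A x) = S x := DFunLike.congr_fun hS x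
  constructor
  · intro hT
    have hT_apply (x : X) : T (A x) = x := DFunLike.congr_fun hT x
    exact ⟨T, by ext a; simp [perturbedLeftInverse, hT_apply]⟩
  · rintro ⟨V, rfl⟩
    ext x
    simp [perturbedLeftInverse, hS_apply]

theorem perturbedLeftInverse_comp_perturbedRightInverse [IsTopologicalAddGroup X]
    [IsTopologicalAddGroup E] (hS : B ∘L A = S) (U : Y →L[R] E) (V : E →L[R] X) :
    perturbedLeftInverse A B S V ∘L perturbedRightInverse A B S U =
      S.symm + V ∘L U - V ∘L A ∘L S.symm ∘L B ∘L U := by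
  have hS_apply (x : X) : B (A x) = S x := DFunLike.congr_fun hS x
  ext y
  simp only [perturbedLeftInverse, perturbedRightInverse, hS_apply, map_add, map_sub,
    ContinuousLinearMap.comp_apply, add_apply, sub_apply, ContinuousLinearEquiv.coe_coe,
    ContinuousLinearEquiv.apply_symm_apply]
  abel

end OneSidedInverses

namespace pASF

variable {p : ℝ≥0∞} [Fact (1 ≤ p)] {X : Type*} [NormedAddCommGroup X] [NormedSpace ℝ X]
  (F G : pASF p X)

theorem hasSum_f_smul_τ (x : X) : HasSum (fun n => G.f n x • F.τ n) (F.θτ (G.θf x)) := by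
  simpa only [G.hθf] using F.hθτ (G.θf x)

theorem θτ_comp_θf_s12 : F.θτ ∘L F.θf = F.S := by
  ext x
  exact (F.hasSum_f_smul_τ F x).unique (F.hS x)

theorem isDual_iff_comp_eq_id :
    F.IsDual G ↔ F.θτ ∘L G.θf = .id ℝ X ∧ G.θτ ∘L F.θf = .id ℝ X := by
  have hasSum_iff (F G : pASF p X) (x : X) :
      HasSum (fun n => G.f n x • F.τ n) x ↔ F.θτ (G.θf x) = x :=
    ⟨(F.hasSum_f_smul_τ G x).unique, fun hx => by simpa only [hx] using F.hasSum_f_smul_τ G x⟩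
  simp only [IsDual, hasSum_iff, forall_and, ContinuousLinearMap.ext_iff,
    ContinuousLinearMap.comp_apply, ContinuousLinearMap.id_apply]

theorem θτ_single (n : ℕ) : F.θτ (lp.single p n 1) = F.τ n := by
  refine (F.hθτ _).unique ?_
  convert hasSum_single n fun m hm => ?_
  · rw [lp.single_apply_self, one_smul]
  · rw [lp.single_apply_ne p n _ hm, zero_smul]

theorem θf_eq_iff {T : X →L[ℝ] lp (fun _ : ℕ => ℝ) p} :
    F.θf = T ↔ ∀ n x, F.f n x = T x n := by
  simp only [ContinuousLinearMap.ext_iff, lp.ext_iff, funext_iff, F.hθf]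
  exact forall_comm

theorem θτ_eq_iff (hp : p ≠ ∞) {T : lp (fun _ : ℕ => ℝ) p →L[ℝ] X} :
    F.θτ = T ↔ ∀ n, F.τ n = T (lp.single p n 1) := by
  constructor
  · rintro rfl n
    exact (F.θτ_single n).symm
  · intro hT
    refine lp.ext_continuousLinearMap hp fun n => ?_
    ext
    simpa [F.θτ_single] using hT n

theorem θf_eq_perturbedRightInverse_iff (U : X →L[ℝ] lp (fun _ : ℕ => ℝ) p) :
    G.θf = perturbedRightInverse F.θf F.θτ F.S U ↔
      ∀ n x, G.f n x = F.f n (F.S.symm x) + U x n - F.f n (F.S.symm (F.θτ (U x))) := by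
  simp only [θf_eq_iff, ← F.hθf]
  rfl

theorem θτ_eq_perturbedLeftInverse_iff (hp : p ≠ ∞) (V : lp (fun _ : ℕ => ℝ) p →L[ℝ] X) :
    G.θτ = perturbedLeftInverse F.θf F.θτ F.S V ↔
      ∀ n, G.τ n = F.S.symm (F.τ n) + V (lp.single p n 1) - V (F.θf (F.S.symm (F.τ n))) := by
  simp only [G.θτ_eq_iff hp, ← F.θτ_single]
  rfl

end pASF

/-- full characterization of the dual p-ASFs of a p-ASF `(f, τ)`. -/
theorem stmt_12 {X : Type*} [NormedAddCommGroup X] [NormedSpace ℝ X] [CompleteSpace X]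
    (p : ℝ≥0∞) [Fact (1 ≤ p)] (hp : p ≠ ∞) (F G : pASF p X) :
    F.IsDual G ↔
    ∃ (U : X →L[ℝ] lp (fun _ : ℕ => ℝ) p) (V : lp (fun _ : ℕ => ℝ) p →L[ℝ] X),
      (∀ (n : ℕ) (x : X),
        G.f n x = F.f n (F.S.symm x) + (U x : ℕ → ℝ) n
          - F.f n (F.S.symm (F.θτ (U x)))) ∧
      (∀ n : ℕ,
        G.τ n = F.S.symm (F.τ n) + V (lp.single p n 1)
          - V (F.θf (F.S.symm (F.τ n)))) ∧
      (∃ W : X ≃L[ℝ] X,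
        (W : X →L[ℝ] X) = (F.S.symm : X →L[ℝ] X) + V.comp U
          - V.comp (F.θf.comp ((F.S.symm : X →L[ℝ] X).comp (F.θτ.comp U)))) := by
  rw [F.isDual_iff_comp_eq_id G, comp_eq_id_iff_exists_eq_perturbedRightInverse F.θτ_comp_θf_s12,
    comp_eq_id_iff_exists_eq_perturbedLeftInverse F.θτ_comp_θf_s12]
  constructor
  · rintro ⟨⟨U, hU⟩, V, hV⟩
    refine ⟨U, V, (F.θf_eq_perturbedRightInverse_iff G U).1 hU,
      (F.θτ_eq_perturbedLeftInverse_iff G hp V).1 hV, G.S, ?_⟩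
    rw [← G.θτ_comp_θf_s12, hU, hV, perturbedLeftInverse_comp_perturbedRightInverse F.θτ_comp_θf_s12]
  · rintro ⟨U, V, hf, hτ, -⟩
    exact ⟨⟨U, (F.θf_eq_perturbedRightInverse_iff G U).2 hf⟩,
      V, (F.θτ_eq_perturbedLeftInverse_iff G hp V).2 hτ⟩
end

section
/- Let (f, τ) be a p-ASF for X. If a p-ASF (g, ω) for X is both a dual of (f, τ) and similar to (f, τ), then (g, ω) is the canonical dual of (f, τ); that is, g_n = f_n ∘ S_{f,τ}^{-1} and ω_n = S_{f,τ}^{-1}τ_n for all n ∈ ℕ. Hence the canonical dual is the only dual p-ASF that is similar to (f, τ). -/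
open scoped ENNReal

/-!
Replacing each `f n` by `f n ∘ T` turns the frame operator `S x = ∑ f n x • τ n` into `S ∘ T`, and
replacing each `τ n` by `U (τ n)` turns it into `U ∘ S`. For a similar frame, duality therefore says
`S ∘ T = id` and `U ∘ S = id`, and as `S` is invertible both `T` and `U` equal `S⁻¹`.
-/

/-- The series `∑ n, f n x • τ n` converges to `S x` for every `x`, with sums taken along the
summation filter `L`: `SummationFilter.unconditional ℕ` is the mode of convergence used in `pASF`,
and `SummationFilter.conditional ℕ` is convergence of the series in its given order. The
functionals and the vectors may belong to different frames, so that `(f, τ)` and `(g, ω)` are dual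
when the pairs `(g, τ)` and `(f, ω)` both have the identity as frame operator. -/
def HasFrameOperator {ι R X Y : Type*} [Semiring R] [TopologicalSpace R]
    [AddCommMonoid X] [Module R X] [TopologicalSpace X]
    [AddCommMonoid Y] [Module R Y] [TopologicalSpace Y]
    (L : SummationFilter ι) (f : ι → X →L[R] R) (τ : ι → Y) (S : X →L[R] Y) : Prop :=
  ∀ x, HasSum (fun n => f n x • τ n) (S x) L

section

variable {ι R X Y Z : Type*} [Semiring R] [TopologicalSpace R]
  [AddCommMonoid X] [Module R X] [TopologicalSpace X]
  [AddCommMonoid Y] [Module R Y] [TopologicalSpace Y]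
  [AddCommMonoid Z] [Module R Z] [TopologicalSpace Z]
  {L : SummationFilter ι} {f : ι → X →L[R] R} {τ : ι → Y}

namespace HasFrameOperator

theorem unique [T2Space Y] [L.NeBot] {S S' : X →L[R] Y}
    (hS : HasFrameOperator L f τ S) (hS' : HasFrameOperator L f τ S') : S = S' :=
  ContinuousLinearMap.ext fun x => (hS x).unique (hS' x)

theorem comp_right {S : X →L[R] Y} (hS : HasFrameOperator L f τ S) (T : Z →L[R] X) :
    HasFrameOperator L (fun n => (f n).comp T) τ (S.comp T) :=
  fun z => hS (T z)

theorem comp_left {S : X →L[R] Y} (hS : HasFrameOperator L f τ S) (U : Y →L[R] Z) :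
    HasFrameOperator L f (fun n => U (τ n)) (U.comp S) :=
  fun x => by simpa only [map_smul, ContinuousLinearMap.comp_apply] using (hS x).mapL U

theorem eq_symm_of_comp_right [T2Space Y] [L.NeBot] {S : X ≃L[R] Y} {T : Y →L[R] X}
    (hS : HasFrameOperator L f τ (S : X →L[R] Y))
    (hT : HasFrameOperator L (fun n => (f n).comp T) τ (.id R Y)) :
    T = (S.symm : Y →L[R] X) := by
  have hST : (S : X →L[R] Y).comp T = .id R Y := (hS.comp_right T).unique hT
  ext y
  exact (S.symm_apply_eq.mpr (DFunLike.congr_fun hST y).symm).symm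

theorem eq_symm_of_comp_left [T2Space X] [L.NeBot] {S : X ≃L[R] Y} {U : Y →L[R] X}
    (hS : HasFrameOperator L f τ (S : X →L[R] Y))
    (hU : HasFrameOperator L f (fun n => U (τ n)) (.id R X)) :
    U = (S.symm : Y →L[R] X) := by
  have hUS : U.comp (S : X →L[R] Y) = .id R X := (hS.comp_left U).unique hU
  ext y
  simpa using DFunLike.congr_fun hUS (S.symm y)

end HasFrameOperator

theorem stmt_18_general [T2Space X] [T2Space Y] [L.NeBot] {S : X ≃L[R] Y}
    {g : ι → Y →L[R] R} {ω : ι → X}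
    (hS : HasFrameOperator L f τ (S : X →L[R] Y))
    (hgτ : HasFrameOperator L g τ (.id R Y)) (hfω : HasFrameOperator L f ω (.id R X))
    {T U : Y →L[R] X} (hg : ∀ n, g n = (f n).comp T) (hω : ∀ n, ω n = U (τ n)) :
    (∀ n, g n = (f n).comp (S.symm : Y →L[R] X)) ∧ (∀ n, ω n = S.symm (τ n)) := by
  obtain rfl : g = fun n => (f n).comp T := funext hg
  obtain rfl : ω = fun n => U (τ n) := funext hω
  obtain rfl := hS.eq_symm_of_comp_right hgτ
  obtain rfl := hS.eq_symm_of_comp_left hfω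
  exact ⟨fun _ => rfl, fun _ => rfl⟩

end

/-- the canonical dual is the only dual p-ASF similar to `(f, τ)`:
if `(g, ω)` is a dual of `(f, τ)` and similar to it, then `g n = f n ∘ S⁻¹` and
`ω n = S⁻¹ (τ n)` for all `n`. -/
theorem stmt_18 {X : Type*} [NormedAddCommGroup X] [NormedSpace ℝ X] [CompleteSpace X]
    (p : ℝ≥0∞) [Fact (1 ≤ p)] (hp : p ≠ ∞) (F G : pASF p X)
    (hdual : F.IsDual G)
    (hsim : ∃ Tfg Tτω : X ≃L[ℝ] X,
      (∀ n, G.f n = (F.f n).comp (Tfg : X →L[ℝ] X)) ∧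
      (∀ n, G.τ n = Tτω (F.τ n))) :
    (∀ n, G.f n = (F.f n).comp (F.S.symm : X →L[ℝ] X)) ∧
    (∀ n, G.τ n = F.S.symm (F.τ n)) := by
  obtain ⟨Tfg, Tτω, hf, hτ⟩ := hsim
  exact stmt_18_general (L := .unconditional ℕ) (T := Tfg) (U := Tτω) F.hS
    (fun x => (hdual x).1) (fun x => (hdual x).2) hf hτ
end
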